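/- For all integers p ≥ 1, k ≥ 1 and every i ∈ {1,...,p}, every noncrossing pair partition π of {1,...,2pk} adapted to W_i^k satisfies j_0(π) ≥ 1. -/

import Mathlib

/-- The letter at position `r` (1-based, `1 ≤ r ≤ 2p`) of the word
`W₀ = 1 2 … p p* … 2* 1*`; here `(l, false)` encodes the letter `l` and
`(l, true)` encodes the starred letter `l*`. -/
def letter0 (p r : ℕ) : ℕ × Bool :=
  if r ≤ p then (r, false) else (2 * p + 1 - r, true)

/-- The label of position `m` (1-based) under the periodic word `Wᵢᵏ`, where `Wᵢ`
is the cyclic shift of `W₀` to the right by `i` positions. -/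
def labelW (p i m : ℕ) : ℕ × Bool :=
  letter0 p ((m - 1 + (2 * p - i)) % (2 * p) + 1)

/-- `π` is a noncrossing pair partition of `{1, …, m}`, encoded as the finite set of
its blocks, each block written as an ordered pair `(a, b)` with `a < b`:
all entries lie in `{1, …, m}`, every point of `{1, …, m}` is covered, distinct
blocks are disjoint, and no two blocks cross. -/
def IsNCPP (m : ℕ) (π : Finset (ℕ × ℕ)) : Prop :=
  (∀ b ∈ π, 1 ≤ b.1 ∧ b.2 ≤ m ∧ b.1 < b.2) ∧
  (∀ x, 1 ≤ x → x ≤ m → ∃ b ∈ π, x = b.1 ∨ x = b.2) ∧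
  (∀ b ∈ π, ∀ c ∈ π, (b.1 = c.1 ∨ b.1 = c.2 ∨ b.2 = c.1 ∨ b.2 = c.2) → b = c) ∧
  (∀ b ∈ π, ∀ c ∈ π, ¬(b.1 < c.1 ∧ c.1 < b.2 ∧ b.2 < c.2))

/-- `π ∈ NC²₂ₚₖ(Wᵢᵏ)`: a noncrossing pair partition of `{1, …, 2pk}` each of whose
blocks consists of a position labelled `l` and a position labelled `l*` for some
`l ∈ {1, …, p}` (labels taken from the word `Wᵢᵏ`). -/
def AdaptedNCPP (p i k : ℕ) (π : Finset (ℕ × ℕ)) : Prop :=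
  IsNCPP (2 * p * k) π ∧
  ∀ b ∈ π, ∃ l, 1 ≤ l ∧ l ≤ p ∧
    ((labelW p i b.1 = (l, false) ∧ labelW p i b.2 = (l, true)) ∨
     (labelW p i b.1 = (l, true) ∧ labelW p i b.2 = (l, false)))

/-- The right-leg statistic `jₗ(π) = |R_{l+1}(π)| + |R_{l}*(π)|`: the number of blocks
whose right leg (larger element) is labelled `l+1`, plus the number of blocks whose
right leg is labelled `l*` (the conventions `R₀* = R_{p+1} = ∅` hold automatically,
since those labels never occur). -/
def jstat (p i : ℕ) (π : Finset (ℕ × ℕ)) (l : ℕ) : ℕ :=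
  (π.filter fun b => labelW p i b.2 = (l + 1, false)).card +
  (π.filter fun b => labelW p i b.2 = (l, true)).card

open Classical in
/-- The finset `NC²₂ₚₖ(Wᵢᵏ)` of noncrossing pair partitions of `{1, …, 2pk}`
adapted to `Wᵢᵏ`. -/
noncomputable def NCset (p i k : ℕ) : Finset (Finset (ℕ × ℕ)) :=
  (Finset.Icc 1 (2 * p * k) ×ˢ Finset.Icc 1 (2 * p * k)).powerset.filter
    (AdaptedNCPP p i k)

open Classical in
/-- `Nᵢ(k, (j₀, …, j_p))`: the number of `π ∈ NC²₂ₚₖ(Wᵢᵏ)` with `jₗ(π) = jₗ`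
for all `0 ≤ l ≤ p`. -/
noncomputable def Ncount (p i k : ℕ) (j : Fin (p + 1) → ℕ) : ℕ :=
  ((NCset p i k).filter fun π => ∀ l : Fin (p + 1), jstat p i π (l : ℕ) = j l).card

/-- The generating function `𝒩ᵢ(x, d) = Σ_k (Σ_j Nᵢ(k, j) d^j) x^k ∈ ℝ[[x]]`;
for each `k` only finitely many of the counts `Nᵢ(k, j)` are nonzero, so the inner
`tsum` is a finite sum. -/
noncomputable def genFun (p i : ℕ) (d : Fin (p + 1) → ℝ) : PowerSeries ℝ :=
  PowerSeries.mk fun k =>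
    ∑' j : Fin (p + 1) → ℕ, (Ncount p i k j : ℝ) * ∏ l, d l ^ j l

/-!
In `Wᵢ` with `1 ≤ i < 2p`, the letter `1*` stands at position `i` and immediately precedes the first
occurrence of `1`. Hence the partner of position `i`, being labelled `1`, lies to the right of `i`:
it is a right leg labelled `1`.
-/

/-- The involution `l ↔ l*` on letters, which sends the label of one leg of an adapted block to the
label of the other. -/
def starLetter (x : ℕ × Bool) : ℕ × Bool :=
  (x.1, !x.2)

theorem starLetter_involutive : Function.Involutive starLetter := fun x => by
  simp [starLetter]

theorem AdaptedNCPP.labelW_snd {p i k : ℕ} {π : Finset (ℕ × ℕ)} {b : ℕ × ℕ}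
    (hπ : AdaptedNCPP p i k π) (hb : b ∈ π) :
    labelW p i b.2 = starLetter (labelW p i b.1) := by
  obtain ⟨l, -, -, ⟨hfst, hsnd⟩ | ⟨hfst, hsnd⟩⟩ := hπ.2 b hb <;>
    simp [hfst, hsnd, starLetter]

theorem label_snd_of_involutive {ι α : Type*} [LT ι] {σ : α → α} (hσ : Function.Involutive σ)
    {f : ι → α} {b : ι × ι} {i : ι} (hlt : b.1 < b.2) (hb : f b.2 = σ (f b.1))
    (hi : i = b.1 ∨ i = b.2) (hfirst : b.1 < i → f b.1 ≠ σ (f i)) :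
    f b.2 = σ (f i) := by
  rcases hi with rfl | rfl
  · exact hb
  · exact absurd (hσ.eq_iff.mp hb.symm) (hfirst hlt)

theorem letter0_two_mul {p : ℕ} (hp : 1 ≤ p) : letter0 p (2 * p) = (1, true) := by
  rw [letter0, if_neg (by omega), Nat.add_sub_cancel_left]

theorem letter0_ne_one {p r : ℕ} (hr : 1 < r) : letter0 p r ≠ (1, false) := by
  unfold letter0
  split_ifs <;> simp [hr.ne']

theorem labelW_of_le {p i m : ℕ} (hm : 1 ≤ m) (hmi : m ≤ i) (hi : i ≤ 2 * p) :
    labelW p i m = letter0 p (2 * p - i + m) := by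
  rw [labelW, Nat.mod_eq_of_lt (by omega)]
  congr 1
  omega

theorem labelW_self {p i : ℕ} (hi1 : 1 ≤ i) (hi : i ≤ 2 * p) : labelW p i i = (1, true) := by
  rw [labelW_of_le hi1 le_rfl hi, Nat.sub_add_cancel hi, letter0_two_mul (by omega)]

theorem labelW_ne_one_of_le {p i m : ℕ} (hm : 1 ≤ m) (hmi : m ≤ i) (hi : i < 2 * p) :
    labelW p i m ≠ (1, false) := by
  rw [labelW_of_le hm hmi hi.le]
  exact letter0_ne_one (by omega)

theorem one_le_jstat_of_mem {p i l : ℕ} {π : Finset (ℕ × ℕ)} {b : ℕ × ℕ} (hb : b ∈ π)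
    (hlabel : labelW p i b.2 = (l + 1, false)) : 1 ≤ jstat p i π l :=
  le_add_right (Finset.card_pos.mpr ⟨b, Finset.mem_filter.mpr ⟨hb, hlabel⟩⟩)

theorem jstat_zero_pos_general {p i : ℕ} {π : Finset (ℕ × ℕ)} (hi1 : 1 ≤ i) (hi : i < 2 * p)
    (hblock : ∀ b ∈ π, 1 ≤ b.1 ∧ b.1 < b.2)
    (hstar : ∀ b ∈ π, labelW p i b.2 = starLetter (labelW p i b.1))
    (hcover : ∃ b ∈ π, i = b.1 ∨ i = b.2) :
    1 ≤ jstat p i π 0 := by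
  obtain ⟨b, hb, hib⟩ := hcover
  obtain ⟨hb1, hlt⟩ := hblock b hb
  have hone : starLetter (labelW p i i) = (1, false) := by
    rw [labelW_self hi1 hi.le]
    rfl
  have hfirst (hbi : b.1 < i) : labelW p i b.1 ≠ starLetter (labelW p i i) :=
    hone ▸ labelW_ne_one_of_le hb1 hbi.le hi
  have hright : labelW p i b.2 = (1, false) :=
    (label_snd_of_involutive starLetter_involutive hlt (hstar b hb) hib hfirst).trans hone
  exact one_le_jstat_of_mem hb hright

/-- For `p, k ≥ 1` and `i ∈ {1, …, p}`, every noncrossing pair partition of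
`{1, …, 2pk}` adapted to `Wᵢᵏ` satisfies `j₀(π) ≥ 1`. -/
theorem jstat_zero_pos (p k i : ℕ) (hp : 1 ≤ p) (hk : 1 ≤ k)
    (hi1 : 1 ≤ i) (hip : i ≤ p) (π : Finset (ℕ × ℕ))
    (hπ : AdaptedNCPP p i k π) :
    1 ≤ jstat p i π 0 := by
  obtain ⟨hblock, hcover, -, -⟩ := hπ.1
  exact jstat_zero_pos_general hi1 (by omega) (fun b hb => ⟨(hblock b hb).1, (hblock b hb).2.2⟩)
    (fun _ => hπ.labelW_snd) (hcover i hi1 (by nlinarith))
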